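/- arXiv:1603.09524 — 6 statements merged into one kernel-verified Lean document; each statement's English description precedes it below -/
import Mathlib

section
/- Kernel characterization of the self-pairing: assume l is prime, (α, β) ≠ (0, 0), and Q ∈ M with Q ≠ 0. Then for every P ∈ M, e(P, Q) = 0 if and only if there exists c : ZMod l with P = c • Q. -/
/-- The coordinate form of the self-pairing `e_{α,β}` on `E[l] ≅ Z_l ⊕ Z_l` with
generating pair `G = (1,0)`, `H = (0,1)` and `W = α • G + β • H = (α, β)`:
`e((r₁,s₁),(r₂,s₂)) = (r₁ * s₂ − r₂ * s₁) • W`. -/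
def selfPairing {l : ℕ} (α β : ZMod l) (A B : ZMod l × ZMod l) : ZMod l × ZMod l :=
  (A.1 * B.2 - B.1 * A.2) • ((α, β) : ZMod l × ZMod l)

/-!
A Bézout relation `u * q.1 + v * q.2 = 1` does the work of inverting a nonzero coordinate: it shows
that `q` has trivial annihilator, and that a vector `p` with vanishing determinant `p ∧ q` is
`(u * p.1 + v * p.2) • q`. Over a field, every nonzero vector satisfies such a relation.
-/

section CommSemiring

variable {R : Type*} [CommSemiring R]

theorem smul_eq_zero_iff_of_isCoprime {w : R × R} (hw : IsCoprime w.1 w.2) {r : R} :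
    r • w = 0 ↔ r = 0 := by
  refine ⟨fun h ↦ ?_, fun h ↦ by rw [h, zero_smul]⟩
  obtain ⟨u, v, huv⟩ := hw
  have hfst : r * w.1 = 0 := congrArg Prod.fst h
  have hsnd : r * w.2 = 0 := congrArg Prod.snd h
  calc
    r = r * (u * w.1 + v * w.2) := by rw [huv, mul_one]
    _ = u * (r * w.1) + v * (r * w.2) := by ring
    _ = 0 := by rw [hfst, hsnd, mul_zero, mul_zero, add_zero]

theorem exists_eq_smul_of_isCoprime {p q : R × R} (hq : IsCoprime q.1 q.2)
    (h : p.1 * q.2 = q.1 * p.2) : ∃ c : R, p = c • q := by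
  obtain ⟨u, v, huv⟩ := hq
  refine ⟨u * p.1 + v * p.2, Prod.ext ?_ ?_⟩
  · calc
      p.1 = p.1 * (u * q.1 + v * q.2) := by rw [huv, mul_one]
      _ = u * p.1 * q.1 + v * (p.1 * q.2) := by ring
      _ = (u * p.1 + v * p.2) * q.1 := by rw [h]; ring
  · calc
      p.2 = p.2 * (u * q.1 + v * q.2) := by rw [huv, mul_one]
      _ = u * (q.1 * p.2) + v * p.2 * q.2 := by ring
      _ = (u * p.1 + v * p.2) * q.2 := by rw [← h]; ring

theorem mul_eq_mul_iff_exists_eq_smul_of_isCoprime {p q : R × R} (hq : IsCoprime q.1 q.2) :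
    p.1 * q.2 = q.1 * p.2 ↔ ∃ c : R, p = c • q := by
  refine ⟨exists_eq_smul_of_isCoprime hq, ?_⟩
  rintro ⟨c, rfl⟩
  simp only [Prod.smul_fst, Prod.smul_snd, smul_eq_mul, mul_left_comm, mul_assoc]

end CommSemiring

theorem isCoprime_fst_snd_of_ne_zero {K : Type*} [Semifield K] {q : K × K} (hq : q ≠ 0) :
    IsCoprime q.1 q.2 := by
  by_cases hfst : q.1 = 0
  · have hsnd : q.2 ≠ 0 := fun hsnd ↦ hq (Prod.ext hfst hsnd)
    exact ⟨0, q.2⁻¹, by rw [zero_mul, zero_add, inv_mul_cancel₀ hsnd]⟩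
  · exact ⟨q.1⁻¹, 0, by rw [zero_mul, add_zero, inv_mul_cancel₀ hfst]⟩

theorem selfPairing_eq_zero_iff_general {l : ℕ} {α β : ZMod l} (hαβ : IsCoprime α β)
    {Q : ZMod l × ZMod l} (hQ : IsCoprime Q.1 Q.2) (P : ZMod l × ZMod l) :
    selfPairing α β P Q = 0 ↔ ∃ c : ZMod l, P = c • Q := by
  rw [selfPairing, smul_eq_zero_iff_of_isCoprime (w := (α, β)) hαβ, sub_eq_zero,
    mul_eq_mul_iff_exists_eq_smul_of_isCoprime hQ]

/-- Kernel characterization: for `l` prime, `(α, β) ≠ (0,0)` and `Q ≠ 0`,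
`e(P, Q) = 0` iff `P` is a scalar multiple of `Q`. -/
theorem selfPairing_eq_zero_iff {l : ℕ} (hl : Nat.Prime l) (α β : ZMod l)
    (hαβ : (α, β) ≠ ((0, 0) : ZMod l × ZMod l))
    (Q : ZMod l × ZMod l) (hQ : Q ≠ 0) (P : ZMod l × ZMod l) :
    selfPairing α β P Q = 0 ↔ ∃ c : ZMod l, P = c • Q := by
  have : Fact l.Prime := ⟨hl⟩
  exact selfPairing_eq_zero_iff_general
    (isCoprime_fst_snd_of_ne_zero hαβ) (isCoprime_fst_snd_of_ne_zero hQ) P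
end

section
/- Counting shares that pass verification: assume l is prime, (α, β) ≠ (0, 0), and Q ∈ M with Q ≠ 0. Then for every P ∈ M, the set of P' ∈ M with e(P', Q) = e(P, Q) has exactly l elements (out of l² elements of M); hence a uniformly random guess passes the verification test with probability 1/l. -/
/-! If `u * Q.1 + v * Q.2 = 1`, the linear form `A ↦ u * A.1 + v * A.2` recovers `t` from `t • Q`,
and `A.1 * Q.2 = Q.1 * A.2` forces `A = (u * A.1 + v * A.2) • Q`. Applied to `(α, β)`, this reduces
`e(A, Q) = 0` to `A.1 * Q.2 = Q.1 * A.2`; applied to `Q`, it shows that the fiber of `e(·, Q)`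
through `P` is the line `t ↦ P + t • Q`, traversed injectively. -/

theorem isCoprime_of_prod_ne_zero {K : Type*} [Semifield K] {p : K × K} (hp : p ≠ 0) :
    IsCoprime p.1 p.2 := by
  by_cases h₁ : p.1 = 0
  · have h₂ : p.2 ≠ 0 := fun h₂ ↦ hp (Prod.ext h₁ h₂)
    exact ⟨0, p.2⁻¹, by rw [zero_mul, zero_add, inv_mul_cancel₀ h₂]⟩
  · exact ⟨p.1⁻¹, 0, by rw [zero_mul, add_zero, inv_mul_cancel₀ h₁]⟩

section CommSemiring

variable {R : Type*} [CommSemiring R] {p q : R × R}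

theorem smul_left_injective_of_isCoprime (hq : IsCoprime q.1 q.2) :
    Function.Injective (fun t : R ↦ t • q) := by
  obtain ⟨u, v, huv⟩ := hq
  have left_inverse : Function.LeftInverse (fun x : R × R ↦ u * x.1 + v * x.2) (· • q) := by
    intro t
    calc u * (t * q.1) + v * (t * q.2) = t * (u * q.1 + v * q.2) := by ring
      _ = t := by rw [huv, mul_one]
  exact left_inverse.injective

theorem exists_smul_eq_iff_of_isCoprime (hq : IsCoprime q.1 q.2) :
    (∃ t : R, t • q = p) ↔ p.1 * q.2 = q.1 * p.2 := by
  constructor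
  · rintro ⟨t, rfl⟩
    simp only [Prod.smul_fst, Prod.smul_snd, smul_eq_mul]
    ring
  · intro h
    obtain ⟨u, v, huv⟩ := hq
    refine ⟨u * p.1 + v * p.2, Prod.ext ?_ ?_⟩
    · calc (u * p.1 + v * p.2) * q.1 = u * p.1 * q.1 + v * (q.1 * p.2) := by ring
        _ = p.1 * (u * q.1 + v * q.2) := by rw [← h]; ring
        _ = p.1 := by rw [huv, mul_one]
    · calc (u * p.1 + v * p.2) * q.2 = u * (p.1 * q.2) + v * p.2 * q.2 := by ring
        _ = p.2 * (u * q.1 + v * q.2) := by rw [h]; ring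
        _ = p.2 := by rw [huv, mul_one]

end CommSemiring

section SelfPairing

variable {l : ℕ} {α β : ZMod l}

theorem selfPairing_sub_left (α β : ZMod l) (A B C : ZMod l × ZMod l) :
    selfPairing α β (A - B) C = selfPairing α β A C - selfPairing α β B C := by
  simp only [selfPairing, Prod.fst_sub, Prod.snd_sub, ← sub_smul]
  congr 1
  ring

theorem selfPairing_eq_zero_iff_s8 (hW : IsCoprime α β) {A B : ZMod l × ZMod l} :
    selfPairing α β A B = 0 ↔ A.1 * B.2 = B.1 * A.2 := by
  have smul_eq_zero_iff (t : ZMod l) : t • (α, β) = 0 ↔ t = 0 := by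
    simpa only [zero_smul] using
      (smul_left_injective_of_isCoprime (q := (α, β)) hW).eq_iff (a := t) (b := 0)
  rw [selfPairing, smul_eq_zero_iff, sub_eq_zero]

theorem setOf_selfPairing_eq (hW : IsCoprime α β) {Q : ZMod l × ZMod l} (hQ : IsCoprime Q.1 Q.2)
    (P : ZMod l × ZMod l) :
    {P' | selfPairing α β P' Q = selfPairing α β P Q} = Set.range fun t : ZMod l ↦ P + t • Q := by
  ext P'
  calc selfPairing α β P' Q = selfPairing α β P Q
    _ ↔ selfPairing α β (P' - P) Q = 0 := by rw [selfPairing_sub_left, sub_eq_zero]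
    _ ↔ ∃ t : ZMod l, t • Q = P' - P := by
      rw [selfPairing_eq_zero_iff_s8 hW, exists_smul_eq_iff_of_isCoprime hQ]
    _ ↔ ∃ t : ZMod l, P + t • Q = P' := by simp only [eq_sub_iff_add_eq']

theorem card_selfPairing_fiber_general [NeZero l] (hW : IsCoprime α β) {Q : ZMod l × ZMod l}
    (hQ : IsCoprime Q.1 Q.2) (P : ZMod l × ZMod l) :
    Nat.card {P' : ZMod l × ZMod l // selfPairing α β P' Q = selfPairing α β P Q} = l := by
  have line_injective : Function.Injective fun t : ZMod l ↦ P + t • Q :=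
    (add_right_injective P).comp (smul_left_injective_of_isCoprime hQ)
  calc Nat.card {P' | selfPairing α β P' Q = selfPairing α β P Q}
    _ = Nat.card (Set.range fun t : ZMod l ↦ P + t • Q) := by rw [setOf_selfPairing_eq hW hQ]
    _ = Nat.card (ZMod l) := Nat.card_range_of_injective line_injective
    _ = l := by rw [Nat.card_eq_fintype_card, ZMod.card]

end SelfPairing

/-- Counting shares that pass verification: for `l` prime, `(α, β) ≠ (0,0)` and
`Q ≠ 0`, exactly `l` of the `l²` elements `P'` of `M` satisfy
`e(P', Q) = e(P, Q)`; hence a uniformly random guess passes with probability `1/l`. -/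
theorem card_selfPairing_fiber {l : ℕ} (hl : Nat.Prime l) (α β : ZMod l)
    (hαβ : (α, β) ≠ ((0, 0) : ZMod l × ZMod l))
    (Q : ZMod l × ZMod l) (hQ : Q ≠ 0) (P : ZMod l × ZMod l) :
    Nat.card {P' : ZMod l × ZMod l // selfPairing α β P' Q = selfPairing α β P Q} = l := by
  have : Fact l.Prime := ⟨hl⟩
  exact card_selfPairing_fiber_general (isCoprime_of_prod_ne_zero hαβ)
    (isCoprime_of_prod_ne_zero hQ) P
end

section
/- Range of the verification map (content underlying Theorem 3, that the code V_i = e(P_i, Q) reveals nothing beyond membership in an l-element fiber): assume l is prime and Q ∈ M with Q ≠ 0. Then for every V ∈ M, there exists P ∈ M with e(P, Q) = V if and only if there exists c : ZMod l with V = c • W. In particular the image of the map P ↦ e(P, Q) is exactly the cyclic submodule generated by W. -/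
theorem surjective_mul_sub_mul_of_isCoprime {R : Type*} [CommRing R] {a b : R}
    (h : IsCoprime a b) : Function.Surjective fun P : R × R ↦ P.1 * b - a * P.2 := by
  intro c
  obtain ⟨u, v, bezout⟩ := h
  exact ⟨(c * v, -(c * u)), by linear_combination c * bezout⟩

theorem isCoprime_fst_snd_of_ne_zero_s9 {K : Type*} [Semifield K] {Q : K × K} (hQ : Q ≠ 0) :
    IsCoprime Q.1 Q.2 :=
  Semifield.isCoprime_iff.mpr <| not_and_or.mp fun ⟨hfst, hsnd⟩ ↦ hQ (Prod.ext hfst hsnd)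

theorem selfPairing_range_general {R M : Type*} [CommRing R] [SMul R M] {Q : R × R}
    (hQ : IsCoprime Q.1 Q.2) (W V : M) :
    (∃ P : R × R, (P.1 * Q.2 - Q.1 * P.2) • W = V) ↔ ∃ c : R, V = c • W := by
  rw [(surjective_mul_sub_mul_of_isCoprime hQ).exists]
  exact exists_congr fun _ ↦ eq_comm

/-- Range of the verification map: for `l` prime and `Q ≠ 0`, a value `V` is of
the form `e(P, Q)` for some `P` iff `V` is a scalar multiple of `W = (α, β)`;
i.e. the image of `P ↦ e(P, Q)` is exactly the cyclic submodule generated by `W`. -/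
theorem selfPairing_range {l : ℕ} (hl : Nat.Prime l) (α β : ZMod l)
    (Q : ZMod l × ZMod l) (hQ : Q ≠ 0) (V : ZMod l × ZMod l) :
    (∃ P : ZMod l × ZMod l, selfPairing α β P Q = V) ↔
      ∃ c : ZMod l, V = c • ((α, β) : ZMod l × ZMod l) := by
  have : Fact l.Prime := ⟨hl⟩
  exact selfPairing_range_general (isCoprime_fst_snd_of_ne_zero_s9 hQ) (α, β) V
end

section
/- Correctness of Liu-type reconstruction of the masking point: let l be a prime, t a positive integer with t ≤ l, and let V be the t × t matrix over ZMod l with entries V_{k,j} = (k+1)^j for k, j ∈ Fin t. Given a', b' : Fin t → ZMod l, define a_k = ∑_j V_{k,j} · a'_j and b_k = ∑_j V_{k,j} · b'_j, and set P_k := a_k • G + b_k • H and P'_i := a'_i • G + b'_i • H. Then for every Q ∈ M and every i ∈ Fin t, ∑_k (V⁻¹)_{i,k} • e(Q, P_k) = e(Q, P'_i); that is, combining the pseudo-shares e(Q, P_k) with the i-th row of V⁻¹ recovers the masking value e(Q, P'_i). -/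
/-!
The points `P_k` arise from the `P'_j` by the action of `V` on `Mᵗ`. The pairing is linear in its
second argument, so it commutes with this action, and acting with `V⁻¹` undoes it. The determinant
of `V` is the product of the differences of the nodes `1, …, t`, which are positive integers below
`t`, hence units modulo `l` when `t` is at most the least prime factor of `l`.
-/

open Matrix in
theorem isUnit_det_vandermonde_iff {R : Type*} [CommRing R] {n : ℕ} {v : Fin n → R} :
    IsUnit (vandermonde v).det ↔ ∀ i j, i < j → IsUnit (v j - v i) := by
  simp only [det_vandermonde, IsUnit.prod_iff, Finset.mem_univ, Finset.mem_Ioi, forall_const]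

theorem isUnit_natCast_sub_natCast_of_lt_add_minFac {l m n : ℕ} (hmn : m < n)
    (hn : n < m + l.minFac) : IsUnit ((n : ZMod l) - m) := by
  rw [← Nat.cast_sub hmn.le, ZMod.isUnit_iff_coprime]
  exact (Nat.coprime_of_lt_minFac (by lia) (by lia)).symm

theorem isUnit_det_vandermonde_natCast_succ {l t : ℕ} (ht : t ≤ l.minFac) :
    IsUnit (Matrix.vandermonde fun k : Fin t => ((k + 1 : ℕ) : ZMod l)).det :=
  isUnit_det_vandermonde_iff.mpr fun _ _ _ =>
    isUnit_natCast_sub_natCast_of_lt_add_minFac (by lia) (by lia)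

open scoped Matrix.Module in
theorem sum_inv_smul_map_sum_smul {ι R M N : Type*} [CommRing R] [Fintype ι] [DecidableEq ι]
    [AddCommGroup M] [Module R M] [AddCommGroup N] [Module R N] (f : M →ₗ[R] N)
    {A : Matrix ι ι R} (hA : IsUnit A.det) (x : ι → M) (i : ι) :
    ∑ k, A⁻¹ i k • f (∑ j, A k j • x j) = f (x i) := by
  have hinv : A⁻¹ • f.mapMatrixModule ι (A • x) = f.mapMatrixModule ι x := by
    rw [map_smul, smul_smul, Matrix.nonsing_inv_mul A hA, one_smul]
  exact congrFun hinv i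

theorem sum_mul_smul_add_sum_mul_smul {ι R M : Type*} [Fintype ι] [Semiring R] [AddCommMonoid M]
    [Module R M] (c a b : ι → R) (G H : M) :
    (∑ j, c j * a j) • G + (∑ j, c j * b j) • H = ∑ j, c j • (a j • G + b j • H) := by
  simp only [Finset.sum_smul, mul_smul, smul_add, Finset.sum_add_distrib]

theorem isLinearMap_selfPairing {l : ℕ} (α β : ZMod l) (Q : ZMod l × ZMod l) :
    IsLinearMap (ZMod l) (selfPairing α β Q) where
  map_add A B := by
    simp only [selfPairing, Prod.fst_add, Prod.snd_add, ← add_smul]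
    congr 1
    ring
  map_smul c A := by
    simp only [selfPairing, Prod.smul_fst, Prod.smul_snd, smul_eq_mul, smul_smul]
    congr 1
    ring

theorem liu_reconstruction_general {l t : ℕ} (htl : t ≤ l.minFac)
    (α β : ZMod l)
    (V : Matrix (Fin t) (Fin t) (ZMod l))
    (hV : V = Matrix.of fun k j : Fin t => (((k : ℕ) + 1 : ℕ) : ZMod l) ^ (j : ℕ))
    (a' b' : Fin t → ZMod l)
    (a b : Fin t → ZMod l)
    (ha : ∀ k, a k = ∑ j, V k j * a' j)
    (hb : ∀ k, b k = ∑ j, V k j * b' j)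
    (P P' : Fin t → ZMod l × ZMod l)
    (hP : ∀ k, P k = a k • ((1, 0) : ZMod l × ZMod l) + b k • ((0, 1) : ZMod l × ZMod l))
    (hP' : ∀ i, P' i = a' i • ((1, 0) : ZMod l × ZMod l) + b' i • ((0, 1) : ZMod l × ZMod l))
    (Q : ZMod l × ZMod l) (i : Fin t) :
    ∑ k, (V⁻¹) i k • selfPairing α β Q (P k) = selfPairing α β Q (P' i) := by
  have hdet : IsUnit V.det := hV ▸ isUnit_det_vandermonde_natCast_succ htl
  have hPV : ∀ k, P k = ∑ j, V k j • P' j := fun k => by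
    simp only [hP, hP', ha, hb, sum_mul_smul_add_sum_mul_smul]
  simp only [hPV]
  exact sum_inv_smul_map_sum_smul (isLinearMap_selfPairing α β Q).mk' hdet P' i

/-- Correctness of Liu-type reconstruction of the masking point: with the
Vandermonde matrix `V`, shares `a = V a'`, `b = V b'`, share points
`P_k = a_k • G + b_k • H` and `P'_i = a'_i • G + b'_i • H`, combining the
pseudo-shares `e(Q, P_k)` with the `i`-th row of `V⁻¹` recovers `e(Q, P'_i)`. -/
theorem liu_reconstruction {l t : ℕ} (hl : Nat.Prime l) (ht : 0 < t) (htl : t ≤ l)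
    (α β : ZMod l)
    (V : Matrix (Fin t) (Fin t) (ZMod l))
    (hV : V = Matrix.of fun k j : Fin t => (((k : ℕ) + 1 : ℕ) : ZMod l) ^ (j : ℕ))
    (a' b' : Fin t → ZMod l)
    (a b : Fin t → ZMod l)
    (ha : ∀ k, a k = ∑ j, V k j * a' j)
    (hb : ∀ k, b k = ∑ j, V k j * b' j)
    (P P' : Fin t → ZMod l × ZMod l)
    (hP : ∀ k, P k = a k • ((1, 0) : ZMod l × ZMod l) + b k • ((0, 1) : ZMod l × ZMod l))
    (hP' : ∀ i, P' i = a' i • ((1, 0) : ZMod l × ZMod l) + b' i • ((0, 1) : ZMod l × ZMod l))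
    (Q : ZMod l × ZMod l) (i : Fin t) :
    ∑ k, (V⁻¹) i k • selfPairing α β Q (P k) = selfPairing α β Q (P' i) :=
  liu_reconstruction_general (htl.trans_eq hl.minFac_eq.symm) α β V hV a' b' a b ha hb
    P P' hP hP' Q i
end

section
/- Secrecy of the hidden point against t−1 colluders (precise content of Theorem 4): let l be a prime, t ≥ 2, and let x : Fin (t−1) → ZMod l be an injective family of nonzero evaluation points with values s : Fin (t−1) → ZMod l, arising from some polynomial of degree < t. Then the set of pairs (f.coeff 0, f.coeff (t−1)), as f ranges over all polynomials over ZMod l of degree < t satisfying f(x_j) = s_j for all j, has exactly l elements. Hence t−1 shares leave exactly l equally consistent candidates for the pair (a_0, b_0) determining P_0 = a_0 • G + b_0 • H, and the colluders can do no better than guess with probability 1/l. -/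
/-!
Over a field, the polynomials of degree at most `n` with prescribed values at `n` distinct nodes
form the line `interpolant + b * nodal`, where `nodal` is the monic polynomial of degree `n`
vanishing at the nodes. The parameter `b` is the coefficient of `X ^ n`, so this coefficient
takes every value of the field exactly once on the line and pins down all other coefficients.
-/

open Polynomial

/-- The polynomials a coalition holding the shares `(v i, r i)`, `i ∈ s`, cannot rule out. The
threshold is one more than the number of shares, so the allowed degree is the number of shares. -/
def consistentPolynomials {R ι : Type*} [Semiring R] (s : Finset ι) (v r : ι → R) : Set R[X] :=
  {f | f.degree ≤ s.card ∧ ∀ i ∈ s, f.eval (v i) = r i}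

theorem degree_lt_add_one_iff {R : Type*} [Semiring R] {f : R[X]} {n : ℕ} :
    f.degree < (n : WithBot ℕ) + 1 ↔ f.degree ≤ n := by
  simp only [← Nat.cast_add_one, degree_lt_iff_coeff_zero, degree_le_iff_coeff_zero, Nat.cast_lt,
    Nat.succ_le_iff]

theorem degree_sub_lt_of_coeff_eq {R : Type*} [Ring R] {f g : R[X]} {n : ℕ}
    (hf : f.degree ≤ n) (hg : g.degree ≤ n) (hfg : f.coeff n = g.coeff n) :
    (f - g).degree < n := by
  have hle : (f - g).degree ≤ n := (degree_sub_le f g).trans (max_le hf hg)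
  refine hle.lt_of_ne fun hdeg => coeff_ne_zero_of_eq_degree hdeg ?_
  rw [coeff_sub, hfg, sub_self]

theorem injOn_coeff_card_consistentPolynomials {R ι : Type*} [CommRing R] [IsDomain R]
    {s : Finset ι} {v : ι → R} (hv : Set.InjOn v s) (r : ι → R) :
    Set.InjOn (fun f => f.coeff s.card) (consistentPolynomials s v r) := by
  rintro f ⟨hf, hfr⟩ g ⟨hg, hgr⟩ hfg
  exact eq_of_degree_sub_lt_of_eval_index_eq s hv (degree_sub_lt_of_coeff_eq hf hg hfg)
    fun i hi => (hfr i hi).trans (hgr i hi).symm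

section Field

variable {F ι : Type*} [Field F] [DecidableEq ι] {s : Finset ι} {v : ι → F}

theorem interpolate_add_smul_nodal_mem_consistentPolynomials (hv : Set.InjOn v s)
    (r : ι → F) (b : F) :
    Lagrange.interpolate s v r + b • Lagrange.nodal s v ∈ consistentPolynomials s v r := by
  refine ⟨degree_add_le_of_degree_le (Lagrange.degree_interpolate_lt r hv).le ?_, fun i hi => ?_⟩
  · exact (degree_smul_le b _).trans Lagrange.degree_nodal.le
  · rw [eval_add, eval_smul, Lagrange.eval_interpolate_at_node r hv hi,
      Lagrange.eval_nodal_at_node hi, smul_zero, add_zero]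

theorem coeff_card_interpolate_add_smul_nodal (hv : Set.InjOn v s) (r : ι → F) (b : F) :
    (Lagrange.interpolate s v r + b • Lagrange.nodal s v).coeff s.card = b := by
  have hnodal : (Lagrange.nodal s v).coeff s.card = 1 := by
    simpa only [Lagrange.natDegree_nodal] using
      (Lagrange.nodal_monic (s := s) (v := v)).coeff_natDegree
  rw [coeff_add, coeff_eq_zero_of_degree_lt (Lagrange.degree_interpolate_lt r hv), coeff_smul,
    hnodal, smul_eq_mul, mul_one, zero_add]

end Field

theorem bijOn_coeff_card_consistentPolynomials {F ι : Type*} [Field F] {s : Finset ι}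
    {v : ι → F} (hv : Set.InjOn v s) (r : ι → F) :
    Set.BijOn (fun f => f.coeff s.card) (consistentPolynomials s v r) Set.univ := by
  classical
  exact ⟨Set.mapsTo_univ _ _, injOn_coeff_card_consistentPolynomials hv r, fun b _ =>
    ⟨_, interpolate_add_smul_nodal_mem_consistentPolynomials hv r b,
      coeff_card_interpolate_add_smul_nodal hv r b⟩⟩

theorem card_consistent_secret_pairs_general {F ι : Type*} [Field F] {s : Finset ι}
    {v : ι → F} (hv : Set.InjOn v s) (r : ι → F) :
    Cardinal.mk {p : F × F //
        ∃ f ∈ consistentPolynomials s v r, p = (f.coeff 0, f.coeff s.card)} = Cardinal.mk F := by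
  have hbij := bijOn_coeff_card_consistentPolynomials hv r
  let secretPair (f : F[X]) : F × F := (f.coeff 0, f.coeff s.card)
  have hinj : Set.InjOn secretPair (consistentPolynomials s v r) :=
    fun f hf g hg hfg => hbij.injOn hf hg (congrArg Prod.snd hfg)
  calc
    _ = Cardinal.mk (secretPair '' consistentPolynomials s v r) :=
      Cardinal.mk_congr (Equiv.subtypeEquivRight fun p => by
        simp only [secretPair, Set.mem_image, eq_comm])
    _ = Cardinal.mk (consistentPolynomials s v r) := Cardinal.mk_image_eq_of_injOn _ _ hinj
    _ = Cardinal.mk (Set.univ : Set F) := Cardinal.mk_congr (hbij.equiv _)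
    _ = Cardinal.mk F := Cardinal.mk_univ

/-- Theorem 4 (precise content): secrecy of the hidden point against `t − 1`
colluders.  For `l` prime and `t ≥ 2`, given `t − 1` shares `(x_j, s_j)` at
injective nonzero nodes arising from some polynomial of degree `< t`, the set of
pairs `(f.coeff 0, f.coeff (t−1))`, as `f` ranges over all polynomials of degree
`< t` consistent with the shares, has exactly `l` elements; so the colluders can
only guess the pair `(a₀, b₀)` determining `P₀` with probability `1/l`. -/
theorem card_consistent_secret_pairs {l t : ℕ} (hl : Nat.Prime l) (ht : 2 ≤ t)
    (x : Fin (t - 1) → ZMod l) (hx : Function.Injective x)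
    (hx0 : ∀ j, x j ≠ 0)
    (s : Fin (t - 1) → ZMod l)
    (hex : ∃ f : Polynomial (ZMod l), f.degree < (t : ℕ) ∧ ∀ j, f.eval (x j) = s j) :
    Nat.card {p : ZMod l × ZMod l //
        ∃ f : Polynomial (ZMod l), f.degree < (t : ℕ) ∧ (∀ j, f.eval (x j) = s j) ∧
          p = (f.coeff 0, f.coeff (t - 1))} = l := by
  have : Fact l.Prime := ⟨hl⟩
  obtain ⟨n, rfl⟩ : ∃ n, t = n + 1 := ⟨t - 1, by omega⟩
  simpa [Nat.card, consistentPolynomials, degree_lt_add_one_iff, and_assoc] using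
    congrArg Cardinal.toNat (card_consistent_secret_pairs_general (s := Finset.univ) hx.injOn s)
end

section
/- Correctness of the proposed multi-secret reconstruction: let l be a prime, t ≥ 1, f a polynomial over ZMod l of degree < t, and x : Fin t → ZMod l an injective family of nodes with shares S_j := f(x_j). Set P_0 := (f.coeff 0) • G + (f.coeff (t−1)) • H, let K : Fin m → M be the secrets, and let the published recovery codes be R_i := K_i − e(P_0, ((i : ℕ)+1) • P_0). If g denotes the Lagrange interpolation polynomial of the t points (x_j, S_j) and P_0' := (g.coeff 0) • G + (g.coeff (t−1)) • H, then P_0' = P_0 and R_i + e(P_0', ((i : ℕ)+1) • P_0') = K_i for every i ∈ Fin m; that is, any t participants jointly recover all m secrets. -/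
section Reconstruction

open Polynomial
open scoped Finset

/-- The point `a₀ • G + aₖ • H` that the Dealer hides in the polynomial `∑ aᵢ Xⁱ`. In the scheme
with threshold `t` the index is `k = t - 1`. -/
def secretPoint {R M : Type*} [Semiring R] [AddCommMonoid M] [Module R M] (G H : M) (k : ℕ)
    (p : R[X]) : M :=
  p.coeff 0 • G + p.coeff k • H

variable {F M ι : Type*} [Field F] [AddCommMonoid M] [Module F M] [DecidableEq ι]
  {s : Finset ι} {x S : ι → F} {f : F[X]}

theorem secretPoint_interpolate (G H : M) (k : ℕ) (hx : Set.InjOn x s) (hf : f.degree < #s)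
    (hS : ∀ j ∈ s, f.eval (x j) = S j) :
    secretPoint G H k (Lagrange.interpolate s x S) = secretPoint G H k f := by
  rw [← Lagrange.eq_interpolate_of_eval_eq S hx hf hS]

theorem proposed_scheme_reconstruction_general {A κ : Type*} [AddGroup A] (e : M → M → A)
    (G H : M) (k : ℕ) (hx : Set.InjOn x s) (hf : f.degree < #s)
    (hS : ∀ j ∈ s, f.eval (x j) = S j) (c : κ → ℕ) (K : κ → A) {P₀ P₀' : M}
    (hP₀ : P₀ = secretPoint G H k f)
    (hP₀' : P₀' = secretPoint G H k (Lagrange.interpolate s x S)) :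
    P₀' = P₀ ∧ ∀ i, K i - e P₀ (c i • P₀) + e P₀' (c i • P₀') = K i := by
  have hP : P₀' = P₀ := by rw [hP₀', hP₀, secretPoint_interpolate G H k hx hf hS]
  exact ⟨hP, fun i ↦ by rw [hP, sub_add_cancel]⟩

end Reconstruction

/-- Correctness of the proposed multi-secret reconstruction: any `t` participants,
interpolating their shares `(x_j, f(x_j))` by the Lagrange polynomial `g`, recover
the secret point `P₀ = (f.coeff 0) • G + (f.coeff (t−1)) • H` and hence all `m`
secrets from the published recovery codes `R_i = K_i − e(P₀, (i+1) • P₀)`. -/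
theorem proposed_scheme_reconstruction {l : ℕ} [Fact (Nat.Prime l)]
    {t m : ℕ} (ht : 1 ≤ t) (α β : ZMod l)
    (f : Polynomial (ZMod l)) (hf : f.degree < (t : ℕ))
    (x : Fin t → ZMod l) (hx : Function.Injective x)
    (S : Fin t → ZMod l) (hS : ∀ j, S j = f.eval (x j))
    (P₀ : ZMod l × ZMod l)
    (hP₀ : P₀ = (f.coeff 0) • ((1, 0) : ZMod l × ZMod l) +
      (f.coeff (t - 1)) • ((0, 1) : ZMod l × ZMod l))
    (K : Fin m → ZMod l × ZMod l)
    (R : Fin m → ZMod l × ZMod l)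
    (hR : ∀ i, R i = K i - selfPairing α β P₀ (((i : ℕ) + 1) • P₀))
    (g : Polynomial (ZMod l))
    (hg : g = Lagrange.interpolate Finset.univ x S)
    (P₀' : ZMod l × ZMod l)
    (hP₀' : P₀' = (g.coeff 0) • ((1, 0) : ZMod l × ZMod l) +
      (g.coeff (t - 1)) • ((0, 1) : ZMod l × ZMod l)) :
    P₀' = P₀ ∧ ∀ i, R i + selfPairing α β P₀' (((i : ℕ) + 1) • P₀') = K i := by
  obtain rfl : R = _ := funext hR
  subst hg
  exact proposed_scheme_reconstruction_general (selfPairing α β) (1, 0) (0, 1) (t - 1) hx.injOn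
    (by simpa using hf) (fun j _ ↦ (hS j).symm) (fun i : Fin m ↦ (i : ℕ) + 1) K hP₀ hP₀'
end
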